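/- Let A ∈ ℂ^{m×m}, z₀ ∈ ℂ, and 0 ≤ ε₁ ≤ ε₂ be such that neither ε₁ nor ε₂ is a singular value of A − z₀I. Then 𝒜(ε₁) ⊆ 𝒜(ε₂). -/

import Mathlib

open Complex Matrix MeasureTheory Set Polynomial Topology

noncomputable section

open scoped Classical

/-- `s` is a singular value of the square complex matrix `M`:
`s ≥ 0` and `s²` is an eigenvalue of `M Mᴴ`. -/
def IsSingularValue {k : ℕ} (M : Matrix (Fin k) (Fin k) ℂ) (s : ℝ) : Prop :=
  0 ≤ s ∧ (M * Mᴴ - ((s : ℂ) ^ 2) • 1).det = 0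

/-- The smallest singular value of `M`. -/
def sigmaMin {k : ℕ} (M : Matrix (Fin k) (Fin k) ℂ) : ℝ :=
  sInf {s : ℝ | IsSingularValue M s}

/-- The `ε`-pseudospectrum of `M`. -/
def pspec {k : ℕ} (ε : ℝ) (M : Matrix (Fin k) (Fin k) ℂ) : Set ℂ :=
  {z : ℂ | sigmaMin (M - z • 1) ≤ ε}

/-- The ray emanating from `z₀` in direction `θ`. -/
def ray (z₀ : ℂ) (θ : ℝ) : Set ℂ :=
  {z : ℂ | ∃ r : ℝ, 0 < r ∧ z = z₀ + (r : ℂ) * Complex.exp ((θ : ℂ) * Complex.I)}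

/-- The matrix `C` of the pencil `(C, D_θ)` associated with `A`, `ε`, `z₀`. -/
def pencilC {m : ℕ} (A : Matrix (Fin m) (Fin m) ℂ) (ε : ℝ) (z₀ : ℂ) :
    Matrix (Fin m ⊕ Fin m) (Fin m ⊕ Fin m) ℂ :=
  Matrix.fromBlocks (A - z₀ • 1) ((-(ε : ℂ)) • 1) ((ε : ℂ) • 1) (-(A - z₀ • 1)ᴴ)

/-- The matrix `D_θ` of the pencil `(C, D_θ)`. -/
def pencilD (m : ℕ) (θ : ℝ) : Matrix (Fin m ⊕ Fin m) (Fin m ⊕ Fin m) ℂ :=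
  Matrix.fromBlocks ((-(Complex.I * Complex.exp ((θ : ℂ) * Complex.I))) • 1) 0 0
    ((Complex.I * Complex.exp (-((θ : ℂ) * Complex.I))) • 1)

/-- The spectrum of a matrix pencil `(C, D)`: all `λ` with `det (C - λ D) = 0`. -/
def pencilSpec {k : Type} [Fintype k] [DecidableEq k] (C D : Matrix k k ℂ) : Set ℂ :=
  {lam : ℂ | (C - lam • D).det = 0}

/-- The function `a_ε(θ) = min {(Arg (-iλ))² : λ ∈ Λ(C, D_θ), Re λ ≤ 0}`. -/
def aFun {m : ℕ} (A : Matrix (Fin m) (Fin m) ℂ) (ε : ℝ) (z₀ : ℂ) (θ : ℝ) : ℝ :=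
  sInf {x : ℝ | ∃ lam ∈ pencilSpec (pencilC A ε z₀) (pencilD m θ),
    lam.re ≤ 0 ∧ x = (Complex.arg (-Complex.I * lam)) ^ 2}

/-
Put `λ = iμ` and `w = e^{iθ}`. The lower blocks of `C - λ D_θ` commute, so by Silvester's
formula `det (C - λ D_θ) = 0` says that `(A - (z₀ + μ w)) (A - (z₀ + conj μ w))ᴴ - ε²` is
singular. This condition is symmetric under `μ ↦ conj μ`, and for real `μ` it says that `ε`
is a singular value of `A - (z₀ + μ w)`. Hence `a_ε(θ) = 0` iff `ε` is a singular value of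
`A - z` for some `z` on the ray from `z₀` in direction `θ`. The function `z ↦ σ_min (A - z)`
is `1`-Lipschitz and unbounded on the ray; where `ε₁` is a singular value it is at most
`ε₁`, so further along it takes the value `ε₂`.
-/

section BlockDeterminant

variable {n R : Type*} [Fintype n] [DecidableEq n] [CommRing R]

theorem det_fromBlocks_mul_det_of_commute (A B : Matrix n n R) {C D : Matrix n n R}
    (h : Commute C D) :
    (fromBlocks A B C D).det * D.det = (A * D - B * C).det * D.det := by
  have hmul : fromBlocks A B C D * fromBlocks D 0 (-C) 1 = fromBlocks (A * D - B * C) B 0 D := by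
    simp [fromBlocks_multiply, h.eq, sub_eq_add_neg]
  simpa using congrArg det hmul

/- Perturbing `D` to `X + D` over `R[X]` makes its determinant monic, hence cancellable. -/
theorem det_fromBlocks_of_commute (A B : Matrix n n R) {C D : Matrix n n R} (h : Commute C D) :
    (fromBlocks A B C D).det = (A * D - B * C).det := by
  let ι : Matrix n n R →+* Matrix n n R[X] := Polynomial.C.mapMatrix
  let ev : Matrix n n R[X] →+* Matrix n n R := (evalRingHom 0).mapMatrix
  have hι (P : Matrix n n R) : ev (ι P) = P := by ext; simp [ev, ι]
  have hev : ev (-D).charmatrix = D := by ext; simp [ev, charmatrix, diagonal_apply, apply_ite]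
  have hcomm : Commute (ι C) (-D).charmatrix := by
    have hX : Commute (ι C) (scalar n X) := (scalar_commute _ (Commute.all _) _).symm
    simpa [charmatrix, ι] using hX.sub_right (h.neg_right.map ι)
  have hdet : (fromBlocks (ι A) (ι B) (ι C) (-D).charmatrix).det =
      (ι A * (-D).charmatrix - ι B * ι C).det :=
    (charpoly_monic (-D)).isRegular.right (det_fromBlocks_mul_det_of_commute (ι A) (ι B) hcomm)
  have hblocks : (evalRingHom 0).mapMatrix (fromBlocks (ι A) (ι B) (ι C) (-D).charmatrix) =
      fromBlocks A B C D := by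
    rw [RingHom.mapMatrix_apply, fromBlocks_map]
    exact fromBlocks_inj.2 ⟨hι A, hι B, hι C, hev⟩
  have hschur : ev (ι A * (-D).charmatrix - ι B * ι C) = A * D - B * C := by
    simp only [map_sub, map_mul, hι, hev]
  rw [← hblocks, ← RingHom.map_det, hdet, RingHom.map_det]
  exact congrArg det hschur

end BlockDeterminant

theorem norm_toEuclideanCLM_conjTranspose_sq {n 𝕜 : Type*} [Fintype n] [DecidableEq n] [RCLike 𝕜]
    (M : Matrix n n 𝕜) (x : EuclideanSpace 𝕜 n) :
    ‖toEuclideanCLM (𝕜 := 𝕜) Mᴴ x‖ ^ 2 = RCLike.re (star x.ofLp ⬝ᵥ (M * Mᴴ) *ᵥ x.ofLp) := by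
  rw [← inner_self_eq_norm_sq (𝕜 := 𝕜), EuclideanSpace.inner_eq_star_dotProduct,
    ofLp_toEuclideanCLM, star_mulVec, conjTranspose_conjTranspose, dotProduct_comm,
    ← dotProduct_mulVec, mulVec_mulVec]

section SingularValues

variable {k : ℕ} {M : Matrix (Fin k) (Fin k) ℂ} {s : ℝ}

open scoped MatrixOrder ComplexOrder Matrix.Norms.L2Operator

theorem sigmaMin_le (h : IsSingularValue M s) : sigmaMin M ≤ s :=
  csInf_le ⟨0, fun _ ht => ht.1⟩ h

theorem exists_isSingularValue_sq_eq_of_mem_spectrum {t : ℝ} (ht : t ∈ spectrum ℝ (M * Mᴴ)) :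
    ∃ s, IsSingularValue M s ∧ s ^ 2 = t := by
  have ht₀ : 0 ≤ t := spectrum_nonneg_of_nonneg (posSemidef_self_mul_conjTranspose M).nonneg ht
  refine ⟨√t, ⟨Real.sqrt_nonneg t, ?_⟩, Real.sq_sqrt ht₀⟩
  rw [spectrum.mem_iff, isUnit_iff_isUnit_det, isUnit_iff_ne_zero, not_not] at ht
  rw [← ofReal_pow, Real.sq_sqrt ht₀, ← neg_sub, det_neg, mul_eq_zero]
  exact .inr (by simpa [Algebra.algebraMap_eq_smul_one] using ht)

theorem isSingularValue_sigmaMin [NeZero k] (M : Matrix (Fin k) (Fin k) ℂ) :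
    IsSingularValue M (sigmaMin M) := by
  obtain ⟨s, hs, -⟩ := exists_isSingularValue_sq_eq_of_mem_spectrum
    ((isHermitian_mul_conjTranspose_self M).eigenvalues_mem_spectrum_real 0)
  have hclosed : IsClosed {s | IsSingularValue M s} :=
    isClosed_Ici.inter (isClosed_eq (by fun_prop) continuous_const)
  exact hclosed.csInf_mem ⟨s, hs⟩ ⟨0, fun _ hs => hs.1⟩

theorem IsSingularValue.exists_norm_eq (h : IsSingularValue M s) :
    ∃ x, ‖x‖ = 1 ∧ ‖toEuclideanCLM (𝕜 := ℂ) Mᴴ x‖ = s := by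
  obtain ⟨v, hv, hMv⟩ := exists_mulVec_eq_zero_iff.2 h.2
  rw [sub_mulVec, smul_mulVec, one_mulVec, sub_eq_zero] at hMv
  let y : EuclideanSpace ℂ (Fin k) := WithLp.toLp 2 v
  have hy₀ : ‖y‖ ≠ 0 := by simpa [y] using hv
  have hyv : ‖y‖ ^ 2 = (star v ⬝ᵥ v).re := by
    simpa using norm_toEuclideanCLM_conjTranspose_sq 1 y
  have hMy : ‖toEuclideanCLM (𝕜 := ℂ) Mᴴ y‖ = s * ‖y‖ := by
    refine (sq_eq_sq₀ (norm_nonneg _) (mul_nonneg h.1 (norm_nonneg y))).1 ?_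
    rw [norm_toEuclideanCLM_conjTranspose_sq, hMv, dotProduct_smul, smul_eq_mul, ← ofReal_pow,
      RCLike.re_eq_complex_re, re_ofReal_mul, mul_pow, hyv]
  refine ⟨((‖y‖⁻¹ : ℝ) : ℂ) • y, by simp [norm_smul, hy₀], ?_⟩
  rw [map_smul, norm_smul, hMy, Complex.norm_real, norm_inv, norm_norm]
  field_simp

theorem sigmaMin_mul_norm_le [NeZero k] (M : Matrix (Fin k) (Fin k) ℂ)
    (x : EuclideanSpace ℂ (Fin k)) :
    sigmaMin M * ‖x‖ ≤ ‖toEuclideanCLM (𝕜 := ℂ) Mᴴ x‖ := by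
  have hle : algebraMap ℝ _ (sigmaMin M ^ 2) ≤ M * Mᴴ := by
    refine (algebraMap_le_iff_le_spectrum (isHermitian_mul_conjTranspose_self M)).2 fun t ht => ?_
    obtain ⟨s, hs, rfl⟩ := exists_isSingularValue_sq_eq_of_mem_spectrum ht
    exact pow_le_pow_left₀ (isSingularValue_sigmaMin M).1 (sigmaMin_le hs) 2
  have hx : ‖x‖ ^ 2 = RCLike.re (star x.ofLp ⬝ᵥ x.ofLp) := by
    simpa using norm_toEuclideanCLM_conjTranspose_sq 1 x
  have hquad := (Matrix.le_iff.1 hle).re_dotProduct_nonneg x.ofLp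
  rw [sub_mulVec, Algebra.algebraMap_eq_smul_one, smul_mulVec, one_mulVec, dotProduct_sub,
    dotProduct_smul, map_sub, RCLike.smul_re, sub_nonneg] at hquad
  refine le_of_sq_le_sq ?_ (norm_nonneg _)
  rwa [mul_pow, hx, norm_toEuclideanCLM_conjTranspose_sq]

theorem lipschitzWith_sigmaMin [NeZero k] :
    LipschitzWith 1 (sigmaMin : Matrix (Fin k) (Fin k) ℂ → ℝ) := by
  refine LipschitzWith.of_le_add fun M N => ?_
  obtain ⟨x, hx, hNx⟩ := (isSingularValue_sigmaMin N).exists_norm_eq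
  have hdiff : ‖toEuclideanCLM (𝕜 := ℂ) (M - N)ᴴ x‖ ≤ dist M N := by
    have := (toEuclideanCLM (𝕜 := ℂ) (M - N)ᴴ).le_opNorm x
    rwa [l2_opNorm_toEuclideanCLM, l2_opNorm_conjTranspose, hx, mul_one, ← dist_eq_norm] at this
  calc sigmaMin M ≤ ‖toEuclideanCLM (𝕜 := ℂ) Mᴴ x‖ := by simpa [hx] using sigmaMin_mul_norm_le M x
    _ = ‖toEuclideanCLM (𝕜 := ℂ) Nᴴ x + toEuclideanCLM (𝕜 := ℂ) (M - N)ᴴ x‖ := by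
      simp [conjTranspose_sub]
    _ ≤ sigmaMin N + dist M N := norm_add_le_of_le hNx.le hdiff

theorem isSingularValue_smul_one_iff [NeZero k] (c : ℂ) :
    IsSingularValue (c • (1 : Matrix (Fin k) (Fin k) ℂ)) s ↔ s = ‖c‖ := by
  have hgram : (c • (1 : Matrix (Fin k) (Fin k) ℂ)) * (c • 1)ᴴ - (s : ℂ) ^ 2 • 1 =
      ((‖c‖ ^ 2 - s ^ 2 : ℝ) : ℂ) • 1 := by
    simp [← sub_smul, smul_smul, Complex.mul_conj', mul_comm]
  rw [IsSingularValue, hgram, det_smul, det_one, mul_one, Fintype.card_fin,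
    pow_eq_zero_iff (NeZero.ne k), ofReal_eq_zero, sub_eq_zero]
  refine ⟨fun ⟨hs, h⟩ => ((sq_eq_sq₀ (norm_nonneg c) hs).1 h).symm, ?_⟩
  rintro rfl
  exact ⟨norm_nonneg c, rfl⟩

theorem norm_sub_norm_le_sigmaMin_sub_smul_one [NeZero k] (M : Matrix (Fin k) (Fin k) ℂ) (z : ℂ) :
    ‖z‖ - ‖M‖ ≤ sigmaMin (M - z • 1) := by
  have hσ : sigmaMin (-z • (1 : Matrix (Fin k) (Fin k) ℂ)) = ‖z‖ := by
    simpa using (isSingularValue_smul_one_iff _).1 (isSingularValue_sigmaMin (-z • 1))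
  have h := lipschitzWith_sigmaMin.dist_le_mul (-z • 1) (M - z • 1)
  have hd : dist (-z • 1) (M - z • 1) = ‖M‖ := by simp [dist_eq_norm, norm_neg, sub_eq_add_neg]
  rw [hσ, hd, Real.dist_eq, NNReal.coe_one, one_mul] at h
  linarith [le_abs_self (‖z‖ - sigmaMin (M - z • 1))]

theorem IsSingularValue.exists_mem_ray {z₀ z : ℂ} {θ t : ℝ} (h : IsSingularValue (M - z • 1) s)
    (hz : z ∈ ray z₀ θ) (hst : s ≤ t) : ∃ w ∈ ray z₀ θ, IsSingularValue (M - w • 1) t := by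
  obtain ⟨r, hr, rfl⟩ := hz
  have : NeZero k := ⟨by rintro rfl; simpa using h.2⟩
  let w : ℝ → ℂ := fun ρ => z₀ + ρ * Complex.exp (θ * I)
  have hcont : Continuous fun ρ => sigmaMin (M - w ρ • 1) :=
    lipschitzWith_sigmaMin.continuous.comp (by fun_prop)
  have hlower (ρ : ℝ) : ρ - (‖z₀‖ + ‖M‖) ≤ sigmaMin (M - w ρ • 1) := by
    refine le_trans ?_ (norm_sub_norm_le_sigmaMin_sub_smul_one M (w ρ))
    have := norm_sub_le (w ρ) z₀
    simp only [w, add_sub_cancel_left, norm_mul, Complex.norm_real, norm_exp_ofReal_mul_I,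
      mul_one, Real.norm_eq_abs] at this
    linarith [le_abs_self ρ]
  have htop : Filter.Tendsto (fun ρ => sigmaMin (M - w ρ • 1)) Filter.atTop Filter.atTop :=
    Filter.tendsto_atTop_mono hlower (Filter.tendsto_atTop_add_const_right _ _ Filter.tendsto_id)
  obtain ⟨ρ, hρ, hσ⟩ := isPreconnected_Ici.intermediate_value_Ici (self_mem_Ici (a := r))
    (Filter.le_principal_iff.2 (Filter.Ici_mem_atTop r)) hcont.continuousOn htop
    ((sigmaMin_le h).trans hst)
  exact ⟨w ρ, ⟨ρ, hr.trans_le hρ, rfl⟩, hσ ▸ isSingularValue_sigmaMin _⟩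

end SingularValues

section Pencil

open scoped ComplexConjugate

theorem pencilSpec_eq_spectrum {k : Type} [Fintype k] [DecidableEq k] (C : Matrix k k ℂ)
    {D : Matrix k k ℂ} (hD : IsUnit D.det) : pencilSpec C D = spectrum ℂ (D⁻¹ * C) := by
  ext μ
  have hfactor : D * (algebraMap ℂ (Matrix k k ℂ) μ - D⁻¹ * C) = -(C - μ • D) := by
    rw [Matrix.mul_sub, mul_nonsing_inv_cancel_left _ _ hD, Algebra.algebraMap_eq_smul_one,
      Matrix.mul_smul, Matrix.mul_one, neg_sub]
  have hdet : D.det * (algebraMap ℂ (Matrix k k ℂ) μ - D⁻¹ * C).det =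
      (-1) ^ Fintype.card k * (C - μ • D).det := by
    rw [← det_mul, hfactor, det_neg]
  rw [spectrum.mem_iff, isUnit_iff_isUnit_det, isUnit_iff_ne_zero, not_not,
    ← hD.mul_right_eq_zero, hdet]
  simp [pencilSpec]

theorem isUnit_det_pencilD (m : ℕ) (θ : ℝ) : IsUnit (pencilD m θ).det := by
  rw [pencilD, det_fromBlocks_zero₂₁, det_smul, det_smul]
  simp [Complex.exp_ne_zero]

variable {m : ℕ} (A : Matrix (Fin m) (Fin m) ℂ) (ε : ℝ) (z₀ : ℂ) (θ : ℝ)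

theorem pencilC_sub_smul_pencilD (μ : ℂ) :
    pencilC A ε z₀ - (I * μ) • pencilD m θ =
      fromBlocks (A - (z₀ + μ * Complex.exp (θ * I)) • 1) (-(ε : ℂ) • 1) ((ε : ℂ) • 1)
        (-(A - (z₀ + conj μ * Complex.exp (θ * I)) • 1)ᴴ) := by
  have hexp : conj (Complex.exp (θ * I)) = Complex.exp (-(θ * I)) := by
    rw [← Complex.exp_conj]; simp
  rw [pencilC, pencilD, fromBlocks_smul, sub_eq_add_neg, fromBlocks_neg, fromBlocks_add]
  congr 1
  · rw [smul_smul, ← sub_eq_add_neg, sub_sub, ← add_smul]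
    congr 3
    linear_combination -μ * Complex.exp (θ * I) * I_mul_I
  · simp
  · simp
  · rw [add_smul, ← sub_sub, conjTranspose_sub (A - z₀ • 1), conjTranspose_smul, conjTranspose_one,
      star_mul', star_def, conj_conj, hexp, neg_sub, smul_smul, neg_add_eq_sub, ← neg_smul]
    congr 2
    linear_combination -μ * Complex.exp (-(θ * I)) * I_mul_I

variable {A ε z₀ θ} {μ : ℂ}

theorem I_mul_mem_pencilSpec_iff :
    I * μ ∈ pencilSpec (pencilC A ε z₀) (pencilD m θ) ↔
      ((A - (z₀ + μ * Complex.exp (θ * I)) • 1) *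
        (A - (z₀ + conj μ * Complex.exp (θ * I)) • 1)ᴴ - (ε : ℂ) ^ 2 • 1).det = 0 := by
  have hschur (P Q : Matrix (Fin m) (Fin m) ℂ) :
      P * -Q - (-(ε : ℂ) • 1) * ((ε : ℂ) • 1) = -(P * Q - (ε : ℂ) ^ 2 • 1) := by
    rw [Matrix.mul_neg, smul_mul_smul, Matrix.one_mul, neg_mul, neg_smul, sq]
    abel
  rw [pencilSpec, mem_ofPred, pencilC_sub_smul_pencilD,
    det_fromBlocks_of_commute _ _ ((Commute.one_left _).smul_left _), hschur, det_neg]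
  simp

theorem I_mul_conj_mem_pencilSpec (h : I * μ ∈ pencilSpec (pencilC A ε z₀) (pencilD m θ)) :
    I * conj μ ∈ pencilSpec (pencilC A ε z₀) (pencilD m θ) := by
  rw [I_mul_mem_pencilSpec_iff] at h ⊢
  rw [← conjTranspose_conjTranspose (_ - _), det_conjTranspose, conjTranspose_sub,
    conjTranspose_mul, conjTranspose_conjTranspose, conj_conj, star_eq_zero]
  simpa using h

theorem I_mul_ofReal_mem_pencilSpec_iff (hε : 0 ≤ ε) {r : ℝ} :
    I * r ∈ pencilSpec (pencilC A ε z₀) (pencilD m θ) ↔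
      IsSingularValue (A - (z₀ + r * Complex.exp (θ * I)) • 1) ε := by
  rw [I_mul_mem_pencilSpec_iff, conj_ofReal, IsSingularValue, and_iff_right hε]

variable (A ε z₀ θ) in
theorem exists_mem_pencilSpec_aFun_eq [NeZero m] :
    ∃ lam ∈ pencilSpec (pencilC A ε z₀) (pencilD m θ),
      lam.re ≤ 0 ∧ aFun A ε z₀ θ = (-I * lam).arg ^ 2 := by
  have hspec := pencilSpec_eq_spectrum (pencilC A ε z₀) (isUnit_det_pencilD m θ)
  have hfin : (pencilSpec (pencilC A ε z₀) (pencilD m θ)).Finite := by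
    rw [hspec]; exact finite_spectrum _
  obtain ⟨lam, hlam⟩ : (pencilSpec (pencilC A ε z₀) (pencilD m θ)).Nonempty := by
    rw [hspec]; exact spectrum.nonempty_of_isAlgClosed_of_finiteDimensional ℂ _
  have hmem : aFun A ε z₀ θ ∈ {x : ℝ | ∃ lam ∈ pencilSpec (pencilC A ε z₀) (pencilD m θ),
      lam.re ≤ 0 ∧ x = (-I * lam).arg ^ 2} := by
    refine Set.Nonempty.csInf_mem ?_ ((hfin.image fun lam => (-I * lam).arg ^ 2).subset ?_)
    · obtain hre | hre := le_total lam.re 0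
      · exact ⟨_, lam, hlam, hre, rfl⟩
      · have hI : I * (-I * lam) = lam := by rw [← inv_I, mul_inv_cancel_left₀ I_ne_zero]
        exact ⟨_, _, I_mul_conj_mem_pencilSpec (hI.symm ▸ hlam), by simpa using hre, rfl⟩
    · rintro _ ⟨lam, hlam, -, rfl⟩
      exact mem_image_of_mem _ hlam
  exact hmem

theorem aFun_eq_zero_of_I_mul_mem_pencilSpec {r : ℝ} (hr : 0 ≤ r)
    (h : I * r ∈ pencilSpec (pencilC A ε z₀) (pencilD m θ)) : aFun A ε z₀ θ = 0 := by
  have harg : (-I * (I * r)).arg = 0 := by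
    rw [← inv_I, inv_mul_cancel_left₀ I_ne_zero, arg_ofReal_of_nonneg hr]
  refine IsLeast.csInf_eq ⟨⟨I * r, h, by simp, by rw [harg, zero_pow two_ne_zero]⟩, ?_⟩
  rintro _ ⟨lam, -, -, rfl⟩
  exact sq_nonneg _

/- The value `r = 0` is included because of the convention `Complex.arg 0 = 0`. -/
theorem aFun_eq_zero_iff [NeZero m] :
    aFun A ε z₀ θ = 0 ↔ ∃ r : ℝ, 0 ≤ r ∧ I * r ∈ pencilSpec (pencilC A ε z₀) (pencilD m θ) := by
  refine ⟨fun h => ?_, fun ⟨r, hr, h⟩ => aFun_eq_zero_of_I_mul_mem_pencilSpec hr h⟩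
  obtain ⟨lam, hlam, -, harg⟩ := exists_mem_pencilSpec_aFun_eq A ε z₀ θ
  rw [h, eq_comm, sq_eq_zero_iff, arg_eq_zero_iff_zero_le] at harg
  obtain ⟨r, hr, hr'⟩ : ∃ r ≥ (0 : ℝ), (r : ℂ) = -I * lam :=
    RCLike.nonneg_iff_exists_ofReal.1 harg
  exact ⟨r, hr, by rwa [hr', ← inv_I, mul_inv_cancel_left₀ I_ne_zero]⟩

theorem aFun_eq_zero_iff_exists_mem_ray [NeZero m] (hε : 0 ≤ ε)
    (hsv : ¬ IsSingularValue (A - z₀ • 1) ε) :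
    aFun A ε z₀ θ = 0 ↔ ∃ z ∈ ray z₀ θ, IsSingularValue (A - z • 1) ε := by
  simp only [aFun_eq_zero_iff, I_mul_ofReal_mem_pencilSpec_iff hε]
  constructor
  · rintro ⟨r, hr, h⟩
    have hr₀ : r ≠ 0 := by rintro rfl; exact hsv (by simpa using h)
    exact ⟨_, ⟨r, hr.lt_of_ne' hr₀, rfl⟩, h⟩
  · rintro ⟨_, ⟨r, hr, rfl⟩, h⟩
    exact ⟨r, hr.le, h⟩

end Pencil

theorem stmt7 {m : ℕ} (A : Matrix (Fin m) (Fin m) ℂ) (z₀ : ℂ) (ε₁ ε₂ : ℝ)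
    (hε₁ : 0 ≤ ε₁) (h₁₂ : ε₁ ≤ ε₂)
    (hsv₁ : ¬ IsSingularValue (A - z₀ • 1) ε₁)
    (hsv₂ : ¬ IsSingularValue (A - z₀ • 1) ε₂) :
    {θ : ℝ | θ ∈ Set.Ioc (-Real.pi) Real.pi ∧ aFun A ε₁ z₀ θ = 0} ⊆
      {θ : ℝ | θ ∈ Set.Ioc (-Real.pi) Real.pi ∧ aFun A ε₂ z₀ θ = 0} := by
  rintro θ ⟨hθ, h₀⟩
  refine ⟨hθ, ?_⟩
  obtain rfl | hm := eq_or_ne m 0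
  · simp [aFun, pencilSpec]
  have : NeZero m := ⟨hm⟩
  obtain ⟨z, hz, hsv⟩ := (aFun_eq_zero_iff_exists_mem_ray hε₁ hsv₁).1 h₀
  exact (aFun_eq_zero_iff_exists_mem_ray (hε₁.trans h₁₂) hsv₂).2 (hsv.exists_mem_ray hz h₁₂)
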